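/- Let Γ be a countable group, μ a probability measure on Γ, and S a compact metric space. Let ρ_n, ρ : Γ → Homeo(S) be actions of Γ on S by homeomorphisms such that for every γ ∈ Γ the maps ρ_n(γ) converge uniformly to ρ(γ). For each n let ν_n be a Borel probability measure on S that is μ-stationary for the action ρ_n, i.e. ν_n = Σ_γ μ(γ)·ρ_n(γ)_*ν_n. Assume the action ρ has a unique μ-stationary Borel probability measure ν on S. Then ν_n converges to ν in the weak-* topology on the space of Borel probability measures on S. -/

import Mathlib

open MeasureTheory Filter
open scoped NNReal

lemma isProb_conv_aux {Γ : Type*}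
    {S : Type*} [MetricSpace S] [MeasurableSpace S] [BorelSpace S]
    (μ : Γ → ℝ≥0) (hμ : ∑' γ, μ γ = 1) (r : Γ → S → S) (hr : ∀ γ, Continuous (r γ))
    (η : Measure S) [IsProbabilityMeasure η] :
    IsProbabilityMeasure (Measure.sum fun γ => μ γ • Measure.map (r γ) η) := by
  have hs : Summable μ := by
    by_contra h
    rw [tsum_eq_zero_of_not_summable h] at hμ
    exact zero_ne_one hμ
  constructor
  rw [Measure.sum_apply _ MeasurableSet.univ]
  have : ∀ γ, (μ γ • Measure.map (r γ) η) Set.univ = (μ γ : ENNReal) := by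
    intro γ
    rw [Measure.smul_apply, Measure.map_apply (hr γ).measurable MeasurableSet.univ]
    simp [ENNReal.smul_def]
  simp_rw [this]
  rw [← ENNReal.coe_tsum hs, hμ]
  simp

lemma integral_conv_aux {Γ : Type*}
    {S : Type*} [MetricSpace S] [CompactSpace S] [MeasurableSpace S] [BorelSpace S]
    (μ : Γ → ℝ≥0) (hμ : ∑' γ, μ γ = 1) (r : Γ → S → S) (hr : ∀ γ, Continuous (r γ))
    (η : Measure S) [IsProbabilityMeasure η] (f : BoundedContinuousFunction S ℝ) :
    ∫ x, f x ∂(Measure.sum fun γ => μ γ • Measure.map (r γ) η) =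
      ∑' γ, (μ γ : ℝ) * ∫ x, f (r γ x) ∂η := by
  have := isProb_conv_aux μ hμ r hr η
  rw [integral_sum_measure (f.integrable _)]
  congr 1
  ext γ
  rw [integral_smul_nnreal_measure, integral_map (hr γ).aemeasurable
    f.continuous.aestronglyMeasurable]
  simp [NNReal.smul_def]

/-- Let `Γ` be a countable group and `μ` a probability distribution on `Γ`. Let
`ρₙ, ρ : Γ → S → S` be actions of `Γ` on a compact metric space `S` by homeomorphisms
(homomorphisms into continuous self-maps; since the group elements act invertibly with
continuous inverses, each `ρ(γ)` is a homeomorphism), such that `ρₙ(γ) → ρ(γ)` uniformly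
for every `γ`. If `νₙ` is a `μ`-stationary Borel probability measure for `ρₙ` for each `n`,
and `ρ` has a unique `μ`-stationary Borel probability measure `ν`, then `νₙ → ν` weak-*. -/
theorem stationary_measures_weak_star_convergence
    {Γ : Type*} [Group Γ] [Countable Γ]
    {S : Type*} [MetricSpace S] [CompactSpace S] [MeasurableSpace S] [BorelSpace S]
    (μ : Γ → ℝ≥0) (hμ : ∑' γ, μ γ = 1)
    (ρₙ : ℕ → Γ → S → S) (ρ : Γ → S → S)
    (hρₙcont : ∀ n γ, Continuous (ρₙ n γ)) (hρcont : ∀ γ, Continuous (ρ γ))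
    (hρₙone : ∀ n, ρₙ n 1 = id) (hρone : ρ 1 = id)
    (hρₙmul : ∀ n γ₁ γ₂, ρₙ n (γ₁ * γ₂) = ρₙ n γ₁ ∘ ρₙ n γ₂)
    (hρmul : ∀ γ₁ γ₂, ρ (γ₁ * γ₂) = ρ γ₁ ∘ ρ γ₂)
    (hconv : ∀ γ, TendstoUniformly (fun n x => ρₙ n γ x) (ρ γ) atTop)
    (νₙ : ℕ → Measure S) (hνₙprob : ∀ n, IsProbabilityMeasure (νₙ n))
    (hνₙstat : ∀ n, νₙ n = Measure.sum fun γ => μ γ • Measure.map (ρₙ n γ) (νₙ n))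
    (ν : Measure S) (hνprob : IsProbabilityMeasure ν)
    (hνstat : ν = Measure.sum fun γ => μ γ • Measure.map (ρ γ) ν)
    (hunique : ∀ η : Measure S, IsProbabilityMeasure η →
      η = (Measure.sum fun γ => μ γ • Measure.map (ρ γ) η) → η = ν) :
    ∀ f : C(S, ℝ), Tendsto (fun n => ∫ x, f x ∂(νₙ n)) atTop (nhds (∫ x, f x ∂ν)) := by
  have hs : Summable μ := by
    by_contra h
    rw [tsum_eq_zero_of_not_summable h] at hμ
    exact zero_ne_one hμ
  let P : ℕ → ProbabilityMeasure S := fun n => ⟨νₙ n, hνₙprob n⟩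
  suffices h : Tendsto P atTop (nhds ⟨ν, hνprob⟩) by
    intro f
    exact (ProbabilityMeasure.tendsto_iff_forall_integral_tendsto.1 h)
      (BoundedContinuousFunction.mkOfCompact f)
  rw [tendsto_iff_ultrafilter]
  intro U hU
  obtain ⟨η, -, hη⟩ := isCompact_univ.ultrafilter_le_nhds (U.map P) (by simp)
  have hη' : Tendsto P U (nhds η) := hη
  suffices h : η = ⟨ν, hνprob⟩ by rwa [← h]
  have hw := ProbabilityMeasure.tendsto_iff_forall_integral_tendsto.1 hη'
  apply Subtype.ext
  suffices hst : (η : Measure S) =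
      Measure.sum fun γ => μ γ • Measure.map (ρ γ) (η : Measure S) from hunique _ η.2 hst
  have hηp : IsProbabilityMeasure (η : Measure S) := η.2
  have hp := isProb_conv_aux μ hμ ρ hρcont (η : Measure S)
  refine ext_of_forall_integral_eq_of_IsFiniteMeasure fun f => ?_
  have key : Tendsto (fun n => ∑' γ, (μ γ : ℝ) * ∫ x, f (ρₙ n γ x) ∂(νₙ n)) U
      (nhds (∑' γ, (μ γ : ℝ) * ∫ x, f (ρ γ x) ∂(η : Measure S))) := by
    refine tendsto_tsum_of_dominated_convergence (bound := fun γ => (μ γ : ℝ) * ‖f‖)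
      ((NNReal.summable_coe.2 hs).mul_right _) ?_ ?_
    · intro γ
      refine Tendsto.const_mul _ ?_
      have h1 : Tendsto (fun n => ∫ x, f (ρ γ x) ∂(νₙ n)) U
          (nhds (∫ x, f (ρ γ x) ∂(η : Measure S))) :=
        hw (f.compContinuous ⟨ρ γ, hρcont γ⟩)
      have h2 : Tendsto (fun n => ∫ x, f (ρₙ n γ x) ∂(νₙ n) - ∫ x, f (ρ γ x) ∂(νₙ n)) U
          (nhds 0) := by
        refine Tendsto.mono_left ?_ hU
        rw [Metric.tendsto_nhds]
        intro ε hε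
        have huc : UniformContinuous f := CompactSpace.uniformContinuous_of_continuous f.continuous
        have hu := huc.comp_tendstoUniformly (hconv γ)
        filter_upwards [Metric.tendstoUniformly_iff.1 hu (ε / 2) (half_pos hε)] with n hn
        have := hνₙprob n
        have i1 : Integrable (fun x => f (ρₙ n γ x)) (νₙ n) :=
          (f.compContinuous ⟨ρₙ n γ, hρₙcont n γ⟩).integrable _
        have i2 : Integrable (fun x => f (ρ γ x)) (νₙ n) :=
          (f.compContinuous ⟨ρ γ, hρcont γ⟩).integrable _
        rw [← integral_sub i1 i2, dist_zero_right]
        have := norm_integral_le_of_norm_le_const (μ := νₙ n) (C := ε / 2)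
          (f := fun x => f (ρₙ n γ x) - f (ρ γ x)) (Eventually.of_forall fun x => by
            have := (hn x).le
            rw [dist_comm, dist_eq_norm] at this
            exact this)
        simp at this
        simp only [Real.norm_eq_abs]
        linarith
      simpa using h2.add h1
    · refine Eventually.of_forall fun n γ => ?_
      have := hνₙprob n
      rw [norm_mul]
      have h3 := norm_integral_le_of_norm_le_const (μ := νₙ n) (C := ‖f‖)
          (f := fun x => f (ρₙ n γ x)) (Eventually.of_forall fun x => f.norm_coe_le_norm _)
      simp only [probReal_univ, mul_one] at h3
      rw [NNReal.norm_eq]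
      gcongr
  rw [integral_conv_aux μ hμ ρ hρcont (η : Measure S) f]
  refine tendsto_nhds_unique (hw f) (key.congr fun n => ?_)
  have := hνₙprob n
  rw [← integral_conv_aux μ hμ (ρₙ n) (hρₙcont n) (νₙ n) f, ← hνₙstat n]
  rfl
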